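/- Let k have characteristic 0, let G be a semisimple, connected, simply connected algebraic group with Lie algebra 𝔤, and let q be a nonzero scalar; if q is a root of unity of order ℓ, assume ℓ is odd and coprime to 3 whenever 𝔤 contains a G₂-component. Then the quantized coordinate ring O_q(G) ⊆ U_q(𝔤)° satisfies GKdim O_q(G) = dim G. -/

import Mathlib

/-!
Background definitions: comodules over a Hopf algebra, simple comodules, direct
summands, supports, subcoalgebras, cosemisimplicity, Gelfand-Kirillov dimension,
and (measured) Grothendieck semirings of cosemisimple Hopf algebras.
-/

open TensorProduct

/-- The data of a coaction of a Hopf algebra `H` on a `k`-vector space `X`: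
a linear map `ρ : X → X ⊗ H`.  The comodule axioms are recorded separately in
`Comod.IsComodule`. -/
structure Comod (k : Type) [Field k] (H : Type) [Ring H] [HopfAlgebra k H] : Type 1 where
  X : Type
  [addCommGroup : AddCommGroup X]
  [module : Module k X]
  ρ : X →ₗ[k] X ⊗[k] H

attribute [instance] Comod.addCommGroup Comod.module

namespace Comod

variable {k : Type} [Field k] {H : Type} [Ring H] [HopfAlgebra k H]

/-- The trivial `H`-comodule `𝟏`, i.e. `k` with coaction `x ↦ x ⊗ 1`. -/
noncomputable def unit (k : Type) [Field k] (H : Type) [Ring H] [HopfAlgebra k H] :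
    Comod k H where
  X := k
  ρ := (TensorProduct.mk k k H).flip 1

/-- The regular comodule: `H` coacting on itself by comultiplication. -/
noncomputable def regular (k : Type) [Field k] (H : Type) [Ring H] [HopfAlgebra k H] :
    Comod k H where
  X := H
  ρ := Coalgebra.comul

/-- Tensor product of comodules: the coaction on `M ⊗ N` is
`(id ⊗ id ⊗ μ_H) ∘ (id ⊗ τ ⊗ id) ∘ (ρ_M ⊗ ρ_N)`. -/
noncomputable def tensor (M N : Comod k H) : Comod k H where
  X := M.X ⊗[k] N.X
  ρ := (LinearMap.mul' k H).lTensor (M.X ⊗[k] N.X)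
        ∘ₗ (TensorProduct.tensorTensorTensorComm k M.X H N.X H).toLinearMap
        ∘ₗ TensorProduct.map M.ρ N.ρ

/-- Binary direct sum of comodules. -/
noncomputable def dsum (M N : Comod k H) : Comod k H where
  X := M.X × N.X
  ρ := (LinearMap.inl k M.X N.X).rTensor H ∘ₗ M.ρ ∘ₗ LinearMap.fst k M.X N.X
     + (LinearMap.inr k M.X N.X).rTensor H ∘ₗ N.ρ ∘ₗ LinearMap.snd k M.X N.X

/-- Finite direct sum of a family of comodules. -/
noncomputable def pi {ι : Type} [Fintype ι] (S : ι → Comod k H) : Comod k H where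
  X := ∀ i, (S i).X
  ρ := letI := Classical.decEq ι
    ∑ i : ι, (LinearMap.single k (fun j => (S j).X) i).rTensor H ∘ₗ (S i).ρ
        ∘ₗ LinearMap.proj i

/-- `n`-th tensor power of a comodule (`M^{⊗0} = 𝟏`, `M^{⊗1} = M`). -/
noncomputable def tpow (M : Comod k H) : ℕ → Comod k H
  | 0 => unit k H
  | 1 => M
  | n + 2 => (M.tpow (n + 1)).tensor M

/-- A linear map is a map of comodules if it intertwines the coactions. -/
def IsHom (M N : Comod k H) (f : M.X →ₗ[k] N.X) : Prop :=
  N.ρ ∘ₗ f = f.rTensor H ∘ₗ M.ρ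

/-- Isomorphism of comodules. -/
def Iso (M N : Comod k H) : Prop :=
  ∃ e : M.X ≃ₗ[k] N.X, IsHom M N e.toLinearMap

/-- The comodule axioms (coassociativity and counitality) for a coaction. -/
def IsComodule (M : Comod k H) : Prop :=
  (M.ρ.rTensor H ∘ₗ M.ρ =
      (TensorProduct.assoc k M.X H H).symm.toLinearMap
        ∘ₗ (Coalgebra.comul (R := k) (A := H)).lTensor M.X ∘ₗ M.ρ) ∧
  (TensorProduct.rid k M.X).toLinearMap
      ∘ₗ (Coalgebra.counit (R := k) (A := H)).lTensor M.X ∘ₗ M.ρ = LinearMap.id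

/-- A subspace `N ⊆ M` is a subcomodule if the coaction restricts to `N ⊗ H`. -/
def IsSubcomodule (M : Comod k H) (N : Submodule k M.X) : Prop :=
  ∀ x ∈ N, M.ρ x ∈ LinearMap.range (N.subtype.rTensor H)

/-- Simple (hence finite-dimensional) comodules. -/
def IsSimple (M : Comod k H) : Prop :=
  M.IsComodule ∧ Nontrivial M.X ∧ FiniteDimensional k M.X ∧
    ∀ N : Submodule k M.X, M.IsSubcomodule N → N = ⊥ ∨ N = ⊤

/-- `S` is a direct summand of `M` (as comodules): the inclusion splits. -/
def DirectSummand (S M : Comod k H) : Prop :=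
  ∃ (i : S.X →ₗ[k] M.X) (p : M.X →ₗ[k] S.X),
    IsHom S M i ∧ IsHom M S p ∧ p ∘ₗ i = LinearMap.id

/-- `C` is the support of the comodule `M`: the (unique) minimal subspace
`C ⊆ H` with `ρ(M) ⊆ M ⊗ C`. -/
def IsSupport (M : Comod k H) (C : Submodule k H) : Prop :=
  (∀ x : M.X, M.ρ x ∈ LinearMap.range (C.subtype.lTensor M.X)) ∧
    ∀ C' : Submodule k H,
      (∀ x : M.X, M.ρ x ∈ LinearMap.range (C'.subtype.lTensor M.X)) → C ≤ C'

end Comod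

/-- A subspace `C ⊆ H` is a subcoalgebra if `Δ(C) ⊆ C ⊗ C`. -/
def IsSubcoalgebra (k : Type) [Field k] (H : Type) [Ring H] [HopfAlgebra k H]
    (C : Submodule k H) : Prop :=
  ∀ x ∈ C, Coalgebra.comul (R := k) x ∈
    LinearMap.range (TensorProduct.map C.subtype C.subtype)

/-- A simple subcoalgebra: a nonzero subcoalgebra with no proper nonzero
subcoalgebras. -/
def IsSimpleSubcoalgebra (k : Type) [Field k] (H : Type) [Ring H] [HopfAlgebra k H]
    (C : Submodule k H) : Prop :=
  IsSubcoalgebra k H C ∧ C ≠ ⊥ ∧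
    ∀ D : Submodule k H, D ≤ C → IsSubcoalgebra k H D → D = ⊥ ∨ D = C

/-- A Hopf algebra is cosemisimple if every subcomodule of every comodule is a
direct summand. -/
def IsCosemisimple (k : Type) [Field k] (H : Type) [Ring H] [HopfAlgebra k H] : Prop :=
  ∀ M : Comod k H, M.IsComodule →
    ∀ N : Submodule k M.X, M.IsSubcomodule N →
      ∃ N' : Submodule k M.X, M.IsSubcomodule N' ∧ IsCompl N N'

open scoped ENNReal in
/-- The Gelfand-Kirillov dimension of a `k`-algebra `A`:
`sup_V limsup_n log(dim V^n)/log n` over finite-dimensional subspaces `V ⊆ A`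
(for a finitely generated algebra this agrees with the value computed from any
finite-dimensional generating subspace containing `1`). -/
noncomputable def GKdim (k : Type) (A : Type) [Field k] [Ring A] [Algebra k A] : ℝ≥0∞ :=
  ⨆ (V : Submodule k A) (_ : FiniteDimensional k V),
    Filter.limsup
      (fun n : ℕ => ENNReal.ofReal
        (Real.log (Module.finrank k ↥(V ^ n)) / Real.log n)) Filter.atTop

/-- The (measured) Grothendieck semiring of a cosemisimple Hopf algebra `H`:
a commutative semiring `R` together with a class map `cls` on finite-dimensional
`H`-comodules which is constant on isomorphism classes, additive on direct sums,
multiplicative on tensor products, sends `𝟏` to `1`, and induces a bijection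
between iso-classes of finite-dimensional comodules and elements of `R`.
The dimension function `d_H` on `R_+(H)` is recovered as `cls M ↦ dim_k M`. -/
structure GrSemiring (k : Type) [Field k] (H : Type) [Ring H] [HopfAlgebra k H] :
    Type 1 where
  R : Type
  [commSemiring : CommSemiring R]
  cls : Comod k H → R
  cls_one : cls (Comod.unit k H) = 1
  cls_iso : ∀ M N : Comod k H, M.IsComodule → N.IsComodule →
    FiniteDimensional k M.X → FiniteDimensional k N.X → Comod.Iso M N → cls M = cls N
  cls_dsum : ∀ M N : Comod k H, M.IsComodule → N.IsComodule →
    FiniteDimensional k M.X → FiniteDimensional k N.X →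
      cls (M.dsum N) = cls M + cls N
  cls_tensor : ∀ M N : Comod k H, M.IsComodule → N.IsComodule →
    FiniteDimensional k M.X → FiniteDimensional k N.X →
      cls (M.tensor N) = cls M * cls N
  cls_surj : ∀ r : R, ∃ M : Comod k H, M.IsComodule ∧ FiniteDimensional k M.X ∧ cls M = r
  cls_inj : ∀ M N : Comod k H, M.IsComodule → N.IsComodule →
    FiniteDimensional k M.X → FiniteDimensional k N.X → cls M = cls N → Comod.Iso M N

attribute [instance] GrSemiring.commSemiring

/-!
For commutative finitely generated algebras, Noether normalization reduces Gelfand–Kirillov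
dimension to that of polynomial rings, where it is the number of variables; hence it equals the
Krull dimension, and it remains to compare `H` with `A`.

If `q` is a root of unity, `H` is a finite module over a central copy of `A`, and powers of a
subspace of `H` are dominated by powers of a subspace of `A` times a fixed finite-dimensional
space, so the dimension does not change.

If `q` is generic, every finite-dimensional subspace of `H` lies in the space `C(M)` of matrix
coefficients of some comodule `M`, and `C(M)ⁿ = C(M^{⊗n})`. By cosemisimplicity and Burnside's
theorem, `dim C(M)` is the sum of `(dim S)²` over the distinct simple constituents `S` of `M`, a
quantity read off from the class of `M` in the Grothendieck semiring and the dimension function.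
So isomorphic measured Grothendieck semirings give equal growth of the spaces `C(M)ⁿ`.
-/

section Growth

open Filter
open scoped ENNReal Topology

/-- The polynomial growth rate `limsup log (D n) / log n` of a sequence of natural numbers.
It takes values in `ℝ≥0∞` so as to agree with the expression in `GKdim`. -/
noncomputable def growthRate (D : ℕ → ℕ) : ℝ≥0∞ :=
  limsup (fun n : ℕ => ENNReal.ofReal (Real.log (D n) / Real.log n)) atTop

theorem tendsto_ofReal_div_log (c : ℝ) :
    Tendsto (fun n : ℕ => ENNReal.ofReal (c / Real.log n)) atTop (𝓝 0) := by
  have hlog : Tendsto (fun n : ℕ => Real.log (n : ℝ)) atTop atTop :=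
    Real.tendsto_log_atTop.comp tendsto_natCast_atTop_atTop
  simpa using ENNReal.tendsto_ofReal (hlog.const_div_atTop c)

theorem log_natCast_le_log_add_log {a b c : ℕ} (h : a ≤ c * b) :
    Real.log a ≤ Real.log c + Real.log b := by
  rcases Nat.eq_zero_or_pos a with rfl | ha
  · simpa using add_nonneg (Real.log_natCast_nonneg c) (Real.log_natCast_nonneg b)
  · have hcb : c * b ≠ 0 := (ha.trans_le h).ne'
    rw [← Real.log_mul (by exact_mod_cast left_ne_zero_of_mul hcb)
      (by exact_mod_cast right_ne_zero_of_mul hcb)]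
    exact Real.log_le_log (by exact_mod_cast ha) (by exact_mod_cast h)

theorem growthRate_le_of_le_const_mul {D E : ℕ → ℕ} (c : ℕ) (h : ∀ᶠ n in atTop, D n ≤ c * E n) :
    growthRate D ≤ growthRate E := by
  refine le_trans (limsup_le_limsup ?_)
    (ENNReal.limsup_add_of_left_tendsto_zero (tendsto_ofReal_div_log (Real.log c)) _).le
  filter_upwards [h] with n hn
  rw [Pi.add_apply, ← ENNReal.ofReal_add (by positivity) (by positivity), ← add_div]
  gcongr
  exact log_natCast_le_log_add_log hn

theorem growthRate_mono {D E : ℕ → ℕ} (h : ∀ᶠ n in atTop, D n ≤ E n) :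
    growthRate D ≤ growthRate E :=
  growthRate_le_of_le_const_mul 1 (by simpa using h)

theorem growthRate_pow (d : ℕ) : growthRate (fun n => n ^ d) = d := by
  refine Tendsto.limsup_eq (tendsto_const_nhds.congr' ?_)
  filter_upwards [eventually_ge_atTop 2] with n hn
  have hlog : 0 < Real.log n := Real.log_pos (by exact_mod_cast hn)
  rw [Nat.cast_pow, Real.log_pow, mul_div_cancel_right₀ _ hlog.ne', ENNReal.ofReal_natCast]

end Growth

section Dimension

open Module

variable {k A H : Type*} [Field k] [Ring A] [Algebra k A]

theorem finiteDimensional_mul (V W : Submodule k A)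
    [FiniteDimensional k V] [FiniteDimensional k W] : FiniteDimensional k ↥(V * W) :=
  Module.Finite.iff_fg.2 ((Module.Finite.iff_fg.1 ‹_›).mul (Module.Finite.iff_fg.1 ‹_›))

theorem finiteDimensional_pow (V : Submodule k A) [FiniteDimensional k V]
    (n : ℕ) : FiniteDimensional k ↥(V ^ n) :=
  Module.Finite.iff_fg.2 ((Module.Finite.iff_fg.1 ‹_›).pow n)

theorem finrank_mul_le (V W : Submodule k A)
    [FiniteDimensional k V] [FiniteDimensional k W] :
    finrank k ↥(V * W) ≤ finrank k V * finrank k W := by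
  rw [← finrank_tensorProduct, ← Submodule.mulMap_range]
  exact LinearMap.finrank_range_le _

theorem finrank_map_pow_le [Ring H] [Algebra k H] (f : A →ₐ[k] H)
    (V : Submodule k A) [FiniteDimensional k V] (n : ℕ) :
    finrank k ↥(V.map f.toLinearMap ^ n) ≤ finrank k ↥(V ^ n) := by
  have := finiteDimensional_pow V n
  rw [← Submodule.map_pow]
  exact Submodule.finrank_map_le _ _

end Dimension

section RestrictDegree

open MvPolynomial Module

variable {σ R k : Type*} [CommSemiring R] [Field k]

theorem restrictDegree_mul_le (a b : ℕ) :
    restrictDegree σ R a * restrictDegree σ R b ≤ restrictDegree σ R (a + b) := by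
  classical
  refine Submodule.mul_le.2 fun p hp q hq => ?_
  rw [mem_restrictDegree_iff_sup] at *
  intro i
  have := degreeOf_mul_le i p q
  have := hp i
  have := hq i
  simp only [degreeOf_def] at *
  omega

theorem restrictDegree_pow_le (a n : ℕ) :
    restrictDegree σ R a ^ n ≤ restrictDegree σ R (a * n) := by
  induction n with
  | zero => exact Submodule.one_le.2 (restrictTotalDegree_le_restrictDegree _ _ _ (by
      rw [mem_restrictTotalDegree, totalDegree_one]; exact Nat.zero_le _))
  | succ n ih =>
    rw [pow_succ]
    exact (mul_le_mul_left ih _).trans (restrictDegree_mul_le _ _)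

theorem monomial_mem_restrictDegree_one_pow {n : ℕ} {m : σ →₀ ℕ} (hm : ∀ i, m i ≤ n) :
    monomial m (1 : R) ∈ restrictDegree σ R 1 ^ n := by
  classical
  induction n generalizing m with
  | zero =>
    obtain rfl : m = 0 := Finsupp.ext fun i => by simpa using hm i
    exact Submodule.one_le.1 le_rfl
  | succ n ih =>
    let r : σ →₀ ℕ := m.mapRange (min 1) (by simp)
    have hr : m = m - r + r := by
      ext i; simp only [r, Finsupp.add_apply, Finsupp.tsub_apply, Finsupp.mapRange_apply]; omega
    rw [hr, ← one_mul (1 : R), ← monomial_mul, pow_succ]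
    refine Submodule.mul_mem_mul (ih fun i => ?_) ?_
    · have := hm i
      simp only [r, Finsupp.tsub_apply, Finsupp.mapRange_apply]
      omega
    · rw [mem_restrictDegree]
      intro s hs i
      obtain rfl := Finset.mem_singleton.1 (support_monomial_subset hs)
      simp [r]

theorem restrictDegree_le_restrictDegree_one_pow (n : ℕ) :
    restrictDegree σ R n ≤ restrictDegree σ R 1 ^ n := by
  intro p hp
  rw [mem_restrictDegree] at hp
  rw [as_sum p]
  refine Submodule.sum_mem _ fun s hs => ?_
  rw [← mul_one (coeff s p), ← smul_eq_mul, ← smul_monomial]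
  exact Submodule.smul_mem _ _ (monomial_mem_restrictDegree_one_pow (hp s hs))

theorem finrank_restrictDegree [Fintype σ] (m : ℕ) :
    finrank k (restrictDegree σ k m) = (m + 1) ^ Fintype.card σ := by
  classical
  let e : {n : σ →₀ ℕ | ∀ i, n i ≤ m} ≃ (σ → Fin (m + 1)) :=
    { toFun n i := ⟨n.1 i, Nat.lt_succ_of_le (n.2 i)⟩
      invFun n := ⟨Finsupp.equivFunOnFinite.symm (fun i => (n i : ℕ)),
        fun i => Nat.le_of_lt_succ (n i).2⟩
      left_inv n := by ext; simp
      right_inv n := by ext; simp }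
  have b := (basisRestrictSupport k {n : σ →₀ ℕ | ∀ i, n i ≤ m}).reindex e
  exact (finrank_eq_card_basis b).trans (by simp)

theorem exists_le_restrictDegree (V : Submodule k (MvPolynomial σ k)) [FiniteDimensional k V] :
    ∃ m, V ≤ restrictDegree σ k m := by
  obtain ⟨t, rfl⟩ := Module.Finite.iff_fg.1 ‹FiniteDimensional k V›
  refine ⟨t.sup totalDegree, Submodule.span_le.2 fun p hp => ?_⟩
  exact restrictTotalDegree_le_restrictDegree _ _ _
    ((mem_restrictTotalDegree _ _ _).2 (Finset.le_sup hp))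

end RestrictDegree

theorem ringKrullDim_eq_of_isIntegral {R S : Type*} [CommRing R] [CommRing S] [Algebra R S]
    [Algebra.IsIntegral R S] (hinj : Function.Injective (algebraMap R S)) :
    ringKrullDim S = ringKrullDim R := by
  apply le_antisymm
  · exact Order.krullDim_le_of_strictMono (PrimeSpectrum.comap (algebraMap R S))
      fun P Q => Ideal.IsIntegral.comap_lt_comap (I := P.asIdeal) (J := Q.asIdeal)
  · refine iSup_le fun l => ?_
    obtain ⟨Q, -, _, hQ⟩ := Ideal.exists_ideal_over_prime_of_isIntegral
      (RelSeries.head l).asIdeal (⊥ : Ideal S)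
      (by simp [← RingHom.ker_eq_comap_bot, (RingHom.injective_iff_ker_eq_bot _).mp hinj])
    have : Q.LiesOver (RelSeries.head l).asIdeal := ⟨hQ.symm⟩
    obtain ⟨L, hL, -, -⟩ := Ideal.exists_ltSeries_of_hasGoingUp l Q
    exact hL ▸ Order.LTSeries.length_le_krullDim L

section GelfandKirillov

open Filter Module MvPolynomial

variable {k A H : Type} [Field k]

theorem growthRate_le_GKdim [Ring A] [Algebra k A] (V : Submodule k A) [FiniteDimensional k V] :
    growthRate (fun n => finrank k ↥(V ^ n)) ≤ GKdim k A :=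
  le_iSup₂ (f := fun (V : Submodule k A) (_ : FiniteDimensional k V) =>
    growthRate (fun n => finrank k ↥(V ^ n))) V ‹_›

theorem GKdim_le [Ring A] [Algebra k A] {e : ENNReal}
    (h : ∀ V : Submodule k A, FiniteDimensional k V →
      growthRate (fun n => finrank k ↥(V ^ n)) ≤ e) : GKdim k A ≤ e :=
  iSup₂_le h

theorem GKdim_le_of_injective [Ring A] [Ring H] [Algebra k A] [Algebra k H] (f : A →ₐ[k] H)
    (hf : Function.Injective f) : GKdim k A ≤ GKdim k H := by
  refine GKdim_le fun V _ => ?_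
  refine le_trans (growthRate_mono (.of_forall fun n => ?_))
    (growthRate_le_GKdim (V.map f.toLinearMap))
  rw [← Submodule.map_pow]
  exact (Submodule.equivMapOfInjective f.toLinearMap hf (V ^ n)).finrank_eq.le

section FiniteExtension

variable [CommRing A] [Ring H] [Algebra k A] [Algebra k H] [Algebra A H] [IsScalarTower k A H]

theorem exists_le_map_mul_of_finite [Module.Finite A H] :
    ∃ S : Submodule k H, FiniteDimensional k S ∧ 1 ∈ S ∧
      ∀ V : Submodule k H, FiniteDimensional k V → ∃ W : Submodule k A, FiniteDimensional k W ∧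
        V ≤ W.map (IsScalarTower.toAlgHom k A H).toLinearMap * S := by
  obtain ⟨m, f, hf⟩ := Module.Finite.exists_fin' A H
  let e (i : Fin m) : H := f fun j => if i = j then 1 else 0
  refine ⟨Submodule.span k (insert 1 (Set.range e)),
    FiniteDimensional.span_of_finite k ((Set.finite_range e).insert 1),
    Submodule.subset_span (Set.mem_insert _ _), fun V hV => ?_⟩
  obtain ⟨t, rfl⟩ := Module.Finite.iff_fg.1 hV
  choose g hg using hf
  refine ⟨Submodule.span k (Set.range fun p : t × Fin m => g p.1 p.2),
    FiniteDimensional.span_of_finite k (Set.finite_range _), Submodule.span_le.2 fun v hv => ?_⟩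
  rw [← hg v, f.pi_apply_eq_sum_univ]
  refine Submodule.sum_mem _ fun i _ => ?_
  rw [Algebra.smul_def]
  exact Submodule.mul_mem_mul
    (Submodule.mem_map_of_mem (Submodule.subset_span ⟨(⟨v, hv⟩, i), rfl⟩))
    (Submodule.subset_span (Set.mem_insert_of_mem _ ⟨i, rfl⟩))

theorem commute_map_toAlgHom (W : Submodule k A) (V : Submodule k H) :
    Commute (W.map (IsScalarTower.toAlgHom k A H).toLinearMap) V := by
  refine Submodule.mul_comm_of_commute ?_
  rintro _ ⟨a, -, rfl⟩ h -
  exact Algebra.commutes a h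

theorem pow_mul_le_of_mul_le {V W S : Submodule k H} (hVW : Commute W V) (h : V * S ≤ W * S)
    (n : ℕ) : V ^ n * S ≤ W ^ n * S := by
  induction n with
  | zero => simp
  | succ n ih =>
    calc V ^ (n + 1) * S = V * (V ^ n * S) := by rw [pow_succ', mul_assoc]
      _ ≤ V * (W ^ n * S) := mul_le_mul_right ih V
      _ = W ^ n * (V * S) := by rw [← mul_assoc, ← mul_assoc, (hVW.pow_left n).eq]
      _ ≤ W ^ n * (W * S) := mul_le_mul_right h (W ^ n)
      _ = W ^ (n + 1) * S := by rw [pow_succ, mul_assoc]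

theorem GKdim_eq_of_finite [Module.Finite A H] (hinj : Function.Injective (algebraMap A H)) :
    GKdim k H = GKdim k A := by
  refine le_antisymm (GKdim_le fun V _ => ?_)
    (GKdim_le_of_injective (IsScalarTower.toAlgHom k A H) hinj)
  obtain ⟨S, _, hS, hW⟩ := exists_le_map_mul_of_finite (k := k) (A := A) (H := H)
  obtain ⟨W, _, hVW⟩ := hW (V * S) (finiteDimensional_mul V S)
  set W' := W.map (IsScalarTower.toAlgHom k A H).toLinearMap
  refine le_trans (growthRate_le_of_le_const_mul (finrank k S) (.of_forall fun n => ?_))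
    (growthRate_le_GKdim W)
  have := finiteDimensional_pow W' n
  have := finiteDimensional_mul (W' ^ n) S
  have hpow : V ^ n ≤ W' ^ n * S :=
    (le_mul_of_one_le_right' (Submodule.one_le.2 hS)).trans
      (pow_mul_le_of_mul_le (commute_map_toAlgHom W V) hVW n)
  calc finrank k ↥(V ^ n) ≤ finrank k ↥(W' ^ n * S) := Submodule.finrank_mono hpow
    _ ≤ finrank k ↥(W' ^ n) * finrank k S := finrank_mul_le _ _
    _ ≤ finrank k ↥(W ^ n) * finrank k S := by gcongr; exact finrank_map_pow_le _ _ _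
    _ = finrank k S * finrank k ↥(W ^ n) := mul_comm _ _

end FiniteExtension

theorem GKdim_mvPolynomial {σ : Type} [Fintype σ] :
    GKdim k (MvPolynomial σ k) = Fintype.card σ := by
  refine le_antisymm (GKdim_le fun V _ => ?_) ?_
  · obtain ⟨m, hm⟩ := exists_le_restrictDegree V
    rw [← growthRate_pow]
    refine growthRate_le_of_le_const_mul ((m + 1) ^ Fintype.card σ) ?_
    filter_upwards [eventually_ge_atTop 1] with n hn
    calc finrank k ↥(V ^ n) ≤ finrank k (restrictDegree σ k (m * n)) :=
          Submodule.finrank_mono ((pow_le_pow_left' hm n).trans (restrictDegree_pow_le m n))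
      _ = (m * n + 1) ^ Fintype.card σ := finrank_restrictDegree _
      _ ≤ ((m + 1) * n) ^ Fintype.card σ := by gcongr; linarith
      _ = (m + 1) ^ Fintype.card σ * n ^ Fintype.card σ := mul_pow _ _ _
  · refine le_trans ?_ (growthRate_le_GKdim (restrictDegree σ k 1))
    rw [← growthRate_pow]
    refine growthRate_mono (.of_forall fun n => ?_)
    have := finiteDimensional_pow (restrictDegree σ k 1) n
    calc n ^ Fintype.card σ ≤ (n + 1) ^ Fintype.card σ := by gcongr; omega
      _ = finrank k (restrictDegree σ k n) := (finrank_restrictDegree n).symm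
      _ ≤ _ := Submodule.finrank_mono (restrictDegree_le_restrictDegree_one_pow n)

theorem GKdim_eq_of_ringKrullDim_eq [CommRing A] [Algebra k A] (hfg : Algebra.FiniteType k A)
    {d : ℕ} (hd : ringKrullDim A = d) : GKdim k A = d := by
  have : Nontrivial A := by
    by_contra h
    rw [not_nontrivial_iff_subsingleton] at h
    simp [ringKrullDim_eq_bot_of_subsingleton] at hd
  obtain ⟨s, g, hg, hfin⟩ := exists_finite_inj_algHom_of_fg k A
  algebraize [g.toRingHom]
  have : Module.Finite (MvPolynomial (Fin s) k) A := hfin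
  have hs : ringKrullDim A = s := by
    simp [ringKrullDim_eq_of_isIntegral (R := MvPolynomial (Fin s) k) (S := A) hg,
      ringKrullDim_of_isNoetherianRing]
  have : IsScalarTower k (MvPolynomial (Fin s) k) A := .of_algebraMap_eq fun c =>
    (g.commutes c).symm
  rw [GKdim_eq_of_finite (A := MvPolynomial (Fin s) k) hg, GKdim_mvPolynomial, Fintype.card_fin]
  exact_mod_cast hs.symm.trans hd

end GelfandKirillov

section Slice

open Module Coalgebra LinearMap WithConv

variable {k H X Y : Type*} [CommSemiring k] [AddCommMonoid X] [Module k X] [AddCommMonoid Y]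
  [Module k Y]

section Module

variable [AddCommMonoid H] [Module k H]

variable (X) in
/-- The slice map `id ⊗ b : X ⊗ H → X` of a functional `b` on `H`. -/
noncomputable def sliceRight : Dual k H →ₗ[k] X ⊗[k] H →ₗ[k] X :=
  (TensorProduct.rid k X).toLinearMap.compRight k ∘ₗ lTensorHom X

variable (X) in
/-- The slice map `φ ⊗ id : X ⊗ H → H` of a functional `φ` on `X`. -/
noncomputable def sliceLeft : Dual k X →ₗ[k] X ⊗[k] H →ₗ[k] H :=
  (TensorProduct.lid k H).toLinearMap.compRight k ∘ₗ rTensorHom H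

@[simp]
theorem sliceRight_tmul (b : Dual k H) (x : X) (h : H) : sliceRight X b (x ⊗ₜ h) = b h • x := by
  simp [sliceRight]

@[simp]
theorem sliceLeft_tmul (φ : Dual k X) (x : X) (h : H) : sliceLeft X φ (x ⊗ₜ h) = φ x • h := by
  simp [sliceLeft]

theorem sliceRight_rTensor (f : X →ₗ[k] Y) (b : Dual k H) (x : X ⊗[k] H) :
    sliceRight Y b (f.rTensor H x) = f (sliceRight X b x) :=
  LinearMap.congr_fun (f := sliceRight Y b ∘ₗ f.rTensor H) (g := f ∘ₗ sliceRight X b)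
    (by ext; simp) x

theorem sliceLeft_rTensor (f : X →ₗ[k] Y) (φ : Dual k Y) (x : X ⊗[k] H) :
    sliceLeft Y φ (f.rTensor H x) = sliceLeft X (φ ∘ₗ f) x :=
  LinearMap.congr_fun (f := sliceLeft Y φ ∘ₗ f.rTensor H) (g := sliceLeft X (φ ∘ₗ f))
    (by ext; simp) x

theorem apply_sliceLeft (b : Dual k H) (φ : Dual k X) (x : X ⊗[k] H) :
    b (sliceLeft X φ x) = φ (sliceRight X b x) :=
  LinearMap.congr_fun (f := b ∘ₗ sliceLeft X φ) (g := φ ∘ₗ sliceRight X b)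
    (by ext; simp [mul_comm]) x

theorem sliceRight_sliceRight_assoc_symm_tmul (b c : Dual k H) (x : X) (t : H ⊗[k] H) :
    sliceRight X b (sliceRight (X ⊗[k] H) c ((TensorProduct.assoc k X H H).symm (x ⊗ₜ t))) =
      mul' k k (TensorProduct.map b c t) • x := by
  induction t with
  | zero => simp
  | tmul u v => simp [smul_smul, mul_comm]
  | add u v hu hv => simp only [TensorProduct.tmul_add, map_add, hu, hv, add_smul]

end Module

theorem sliceRight_sliceRight_comul [AddCommMonoid H] [Module k H] [Coalgebra k H]
    (b c : Dual k H) (x : X ⊗[k] H) :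
    sliceRight X b (sliceRight (X ⊗[k] H) c ((TensorProduct.assoc k X H H).symm
      ((comul (R := k) (A := H)).lTensor X x))) = sliceRight X (toConv b * toConv c).ofConv x := by
  induction x with
  | zero => simp
  | tmul x h => simpa using sliceRight_sliceRight_assoc_symm_tmul b c x (comul h)
  | add x y hx hy => simp only [map_add, hx, hy]

end Slice

section SliceField

open Module LinearMap

variable {k H X : Type*} [Field k] [AddCommGroup H] [Module k H] [AddCommGroup X] [Module k X]

theorem ext_sliceRight {x y : X ⊗[k] H} (h : ∀ b, sliceRight X b x = sliceRight X b y) :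
    x = y := by
  classical
  refine (TensorProduct.equivFinsuppOfBasisRight (Basis.ofVectorSpace k H)).injective
    (Finsupp.ext fun i => ?_)
  rw [TensorProduct.equivFinsuppOfBasisRight_apply, TensorProduct.equivFinsuppOfBasisRight_apply]
  exact h ((Basis.ofVectorSpace k H).coord i)

theorem finiteDimensional_range_sliceRight_flip (x : X ⊗[k] H) :
    FiniteDimensional k (range ((sliceRight X).flip x)) := by
  induction x with
  | zero => rw [map_zero, range_zero]; infer_instance
  | tmul x h =>
    refine Submodule.finiteDimensional_of_le (S₂ := Submodule.span k {x}) ?_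
    rintro _ ⟨b, rfl⟩
    simpa using Submodule.smul_mem _ _ (Submodule.mem_span_singleton_self x)
  | add x y hx hy =>
    rw [map_add]
    exact Submodule.finiteDimensional_of_le (range_add_le _ _)

end SliceField

section MulTensor

open Module LinearMap

variable {k X Y X' Y' B C : Type*} [CommSemiring k] [AddCommMonoid X] [Module k X]
  [AddCommMonoid Y] [Module k Y] [AddCommMonoid X'] [Module k X'] [AddCommMonoid Y'] [Module k Y']
  [Semiring B] [Algebra k B] [Semiring C] [Algebra k C]

variable (X Y B) in
/-- The map `(X ⊗ B) ⊗ (Y ⊗ B) → (X ⊗ Y) ⊗ B` multiplying the two factors in `B`, through which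
the coaction on a tensor product of comodules is defined. -/
noncomputable def mulTensor : (X ⊗[k] B) ⊗[k] (Y ⊗[k] B) →ₗ[k] (X ⊗[k] Y) ⊗[k] B :=
  (mul' k B).lTensor (X ⊗[k] Y) ∘ₗ (TensorProduct.tensorTensorTensorComm k X B Y B).toLinearMap

@[simp]
theorem mulTensor_tmul (x : X) (y : Y) (b c : B) :
    mulTensor (k := k) X Y B ((x ⊗ₜ b) ⊗ₜ (y ⊗ₜ c)) = (x ⊗ₜ y) ⊗ₜ (b * c) := by
  simp [mulTensor]

theorem mulTensor_comp_map_lTensor (f : B →ₐ[k] C) :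
    mulTensor X Y C ∘ₗ TensorProduct.map (f.toLinearMap.lTensor X) (f.toLinearMap.lTensor Y) =
      f.toLinearMap.lTensor (X ⊗[k] Y) ∘ₗ mulTensor X Y B := by
  ext; simp

theorem mulTensor_comp_map_rTensor (f : X →ₗ[k] X') (g : Y →ₗ[k] Y') :
    mulTensor X' Y' B ∘ₗ TensorProduct.map (f.rTensor B) (g.rTensor B) =
      (TensorProduct.map f g).rTensor B ∘ₗ mulTensor X Y B := by
  ext; simp

theorem mulTensor_assoc :
    (mulTensor X Y B).rTensor C ∘ₗ mulTensor (X ⊗[k] B) (Y ⊗[k] B) C ∘ₗ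
        TensorProduct.map (TensorProduct.assoc k X B C).symm.toLinearMap
          (TensorProduct.assoc k Y B C).symm.toLinearMap =
      (TensorProduct.assoc k (X ⊗[k] Y) B C).symm.toLinearMap ∘ₗ mulTensor X Y (B ⊗[k] C) := by
  ext; simp

theorem rid_comp_mulTensor :
    (TensorProduct.rid k (X ⊗[k] Y)).toLinearMap ∘ₗ mulTensor X Y k =
      TensorProduct.map (TensorProduct.rid k X).toLinearMap
        (TensorProduct.rid k Y).toLinearMap := by
  ext; simp

theorem sliceLeft_mulTensor (φ : Dual k X) (ψ : Dual k Y) (x : X ⊗[k] B) (y : Y ⊗[k] B) :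
    sliceLeft (X ⊗[k] Y) (TensorProduct.dualDistrib k X Y (φ ⊗ₜ ψ)) (mulTensor X Y B (x ⊗ₜ y)) =
      sliceLeft X φ x * sliceLeft Y ψ y :=
  LinearMap.congr_fun
    (f := sliceLeft (X ⊗[k] Y) (TensorProduct.dualDistrib k X Y (φ ⊗ₜ ψ)) ∘ₗ mulTensor X Y B)
    (g := mul' k B ∘ₗ TensorProduct.map (sliceLeft X φ) (sliceLeft Y ψ))
    (by ext; simp [smul_smul, mul_comm]) (x ⊗ₜ y)

end MulTensor

section Endomorphisms

open Module

theorem map₂_dual_tensorProduct {k X Y B : Type*} [CommRing k] [AddCommGroup X] [Module k X]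
    [Module.Free k X] [Module.Finite k X] [AddCommGroup Y] [Module k Y] [Module.Free k Y]
    [Module.Finite k Y] [Ring B] [Algebra k B]
    {F : Dual k (X ⊗[k] Y) →ₗ[k] X ⊗[k] Y →ₗ[k] B} {f : Dual k X →ₗ[k] X →ₗ[k] B}
    {g : Dual k Y →ₗ[k] Y →ₗ[k] B}
    (h : ∀ φ ψ x y, F (TensorProduct.dualDistrib k X Y (φ ⊗ₜ ψ)) (x ⊗ₜ y) = f φ x * g ψ y) :
    Submodule.map₂ F ⊤ ⊤ = Submodule.map₂ f ⊤ ⊤ * Submodule.map₂ g ⊤ ⊤ := by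
  refine le_antisymm (Submodule.map₂_le.2 fun Φ _ t _ => ?_) ?_
  · obtain ⟨u, rfl⟩ := (TensorProduct.dualDistribEquiv k X Y).surjective Φ
    change F (TensorProduct.dualDistrib k X Y u) t ∈ _
    induction u with
    | zero => simp
    | add u v hu hv => simpa using add_mem (hu trivial) (hv trivial)
    | tmul φ ψ =>
      induction t with
      | zero => simp
      | add s t hs ht => simpa using add_mem (hs trivial) (ht trivial)
      | tmul x y =>
        rw [h]
        exact Submodule.mul_mem_mul (Submodule.apply_mem_map₂ _ trivial trivial)
          (Submodule.apply_mem_map₂ _ trivial trivial)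
  · rw [Submodule.map₂_eq_span_image2, Submodule.map₂_eq_span_image2, Submodule.span_mul_span,
      Submodule.span_le]
    rintro _ ⟨_, ⟨φ, -, x, -, rfl⟩, _, ⟨ψ, -, y, -, rfl⟩, rfl⟩
    change f φ x * g ψ y ∈ _
    rw [← h]
    exact Submodule.apply_mem_map₂ _ trivial trivial

theorem subalgebra_end_eq_top_of_isSimpleModule {k V : Type*} [Field k] [IsAlgClosed k]
    [AddCommGroup V] [Module k V] [FiniteDimensional k V] (𝒜 : Subalgebra k (End k V))
    [IsSimpleModule 𝒜 V] : 𝒜 = ⊤ := by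
  have hscalar := (IsSimpleModule.algebraMap_end_bijective_of_isAlgClosed (A := 𝒜) (V := V) k).2
  have : Module.Finite (End 𝒜 V) V := Module.Finite.of_restrictScalars_finite k _ _
  refine eq_top_iff.2 fun f _ => ?_
  let g : End (End 𝒜 V) V :=
    { f with
      map_smul' := fun c v => by
        obtain ⟨c, rfl⟩ := hscalar c
        exact f.map_smul c v }
  obtain ⟨a, ha⟩ := Module.Finite.toModuleEnd_moduleEnd_surjective (R := 𝒜) (M := V) g
  have hfa : f = a := LinearMap.ext fun v => congr($ha v).symm
  exact hfa ▸ a.2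

end Endomorphisms

namespace Comod

open Module Coalgebra LinearMap WithConv

variable {k : Type} [Field k] {H : Type} [Ring H] [HopfAlgebra k H] {L M N S T : Comod k H}

section DualAction

/-- The action of the dual `H*` on an `H`-comodule, `b ↦ (id ⊗ b) ∘ ρ`. Subcomodules are the
invariant subspaces of this action and comodule maps are the equivariant maps. -/
noncomputable def dualAct (M : Comod k H) : Dual k H →ₗ[k] End k M.X :=
  M.ρ.lcomp k M.X ∘ₗ sliceRight M.X

theorem dualAct_apply (M : Comod k H) (b : Dual k H) (m : M.X) :
    M.dualAct b m = sliceRight M.X b (M.ρ m) := rfl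

theorem isComodule_iff (M : Comod k H) :
    M.IsComodule ↔
      (∀ b c, M.dualAct (toConv b * toConv c).ofConv = M.dualAct b * M.dualAct c) ∧
        M.dualAct counit = 1 := by
  refine and_congr ⟨fun h b c => LinearMap.ext fun m => ?_, fun h => LinearMap.ext fun m =>
    ext_sliceRight fun c => ext_sliceRight fun b => ?_⟩ Iff.rfl
  · rw [Module.End.mul_apply, dualAct_apply M b, dualAct_apply M c, ← sliceRight_rTensor,
      dualAct_apply, ← sliceRight_sliceRight_comul]
    exact congr(sliceRight M.X b (sliceRight _ c ($h m))).symm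
  · rw [comp_apply, sliceRight_rTensor]
    exact congr($(h b c) m).symm.trans (sliceRight_sliceRight_comul b c _).symm

theorem isHom_iff {f : M.X →ₗ[k] N.X} :
    IsHom M N f ↔ ∀ b m, N.dualAct b (f m) = f (M.dualAct b m) := by
  refine ⟨fun h b m => ?_, fun h => LinearMap.ext fun m => ext_sliceRight fun b => ?_⟩
  · rw [dualAct_apply, dualAct_apply, ← sliceRight_rTensor]
    exact congr(sliceRight N.X b ($h m))
  · exact (h b m).trans (sliceRight_rTensor f b (M.ρ m)).symm

theorem isSubcomodule_iff {N : Submodule k M.X} :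
    M.IsSubcomodule N ↔ ∀ b, ∀ x ∈ N, M.dualAct b x ∈ N := by
  refine ⟨fun h b x hx => ?_, fun h x hx => ?_⟩
  · obtain ⟨y, hy⟩ := h x hx
    rw [dualAct_apply, ← hy, sliceRight_rTensor]
    exact (sliceRight N b y).2
  · rw [← rTensor_mkQ, mem_ker]
    refine ext_sliceRight fun b => ?_
    rw [sliceRight_rTensor, map_zero]
    exact (Submodule.Quotient.mk_eq_zero N).2 (h b x hx)

end DualAction

section Hom

theorem IsHom.comp {g : M.X →ₗ[k] N.X} {f : L.X →ₗ[k] M.X} (hg : IsHom M N g)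
    (hf : IsHom L M f) : IsHom L N (g ∘ₗ f) := by
  rw [isHom_iff] at *
  simp [hg, hf]

theorem IsHom.symm {e : M.X ≃ₗ[k] N.X} (he : IsHom M N e.toLinearMap) :
    IsHom N M e.symm.toLinearMap := by
  rw [isHom_iff] at *
  exact fun b n => e.injective (by simpa using (he b (e.symm n)).symm)

theorem IsHom.isSubcomodule_map {f : M.X →ₗ[k] N.X} (hf : IsHom M N f) {K : Submodule k M.X}
    (hK : M.IsSubcomodule K) : N.IsSubcomodule (K.map f) := by
  rw [isSubcomodule_iff] at *
  rintro b _ ⟨x, hx, rfl⟩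
  exact ⟨M.dualAct b x, hK b x hx, (isHom_iff.1 hf b x).symm⟩

theorem IsHom.isSubcomodule_comap {f : M.X →ₗ[k] N.X} (hf : IsHom M N f) {K : Submodule k N.X}
    (hK : N.IsSubcomodule K) : M.IsSubcomodule (K.comap f) := by
  rw [isSubcomodule_iff] at *
  intro b x hx
  rw [Submodule.mem_comap, ← isHom_iff.1 hf]
  exact hK b _ hx

theorem isSubcomodule_bot (M : Comod k H) : M.IsSubcomodule ⊥ :=
  isSubcomodule_iff.2 fun b x hx => by simp_all

theorem isSubcomodule_top (M : Comod k H) : M.IsSubcomodule ⊤ :=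
  isSubcomodule_iff.2 fun _ _ _ => trivial

theorem IsHom.isSubcomodule_ker {f : M.X →ₗ[k] N.X} (hf : IsHom M N f) :
    M.IsSubcomodule (ker f) :=
  hf.isSubcomodule_comap N.isSubcomodule_bot

theorem IsHom.isSubcomodule_range {f : M.X →ₗ[k] N.X} (hf : IsHom M N f) :
    N.IsSubcomodule (range f) := by
  rw [range_eq_map]
  exact hf.isSubcomodule_map M.isSubcomodule_top

end Hom

section Constructions

theorem IsComodule.of_disjoint_ker (hM : M.IsComodule) (hN : N.IsComodule)
    {f : L.X →ₗ[k] M.X} {g : L.X →ₗ[k] N.X} (hf : IsHom L M f) (hg : IsHom L N g)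
    (hfg : Disjoint (ker f) (ker g)) : L.IsComodule := by
  have hext (x y : L.X) (h : f x = f y) (h' : g x = g y) : x = y := by
    rw [← sub_eq_zero, ← Submodule.mem_bot k, ← hfg.eq_bot]
    simp [h, h']
  rw [isComodule_iff, isHom_iff] at *
  refine ⟨fun b c => LinearMap.ext fun x => hext _ _ ?_ ?_,
    LinearMap.ext fun x => hext _ _ ?_ ?_⟩ <;>
  simp [← hf, ← hg, hM, hN]

/-- The restriction of a coaction to a subcomodule. -/
noncomputable def restrict (M : Comod k H) {N : Submodule k M.X} (h : M.IsSubcomodule N) :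
    Comod k H where
  X := N
  ρ := (LinearEquiv.ofInjective (N.subtype.rTensor H)
      (Flat.rTensor_preserves_injective_linearMap _ N.subtype_injective)).symm.toLinearMap ∘ₗ
    codRestrict _ (M.ρ ∘ₗ N.subtype) fun x => h x x.2

theorem isHom_subtype {K : Submodule k M.X} (hK : M.IsSubcomodule K) :
    IsHom (M.restrict hK) M K.subtype :=
  LinearMap.ext fun x => (congrArg Subtype.val <|
    (LinearEquiv.ofInjective (K.subtype.rTensor H)
      (Flat.rTensor_preserves_injective_linearMap _ K.subtype_injective)).apply_symm_apply
      (codRestrict _ (M.ρ ∘ₗ K.subtype) (fun x => hK x x.2) x)).symm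

theorem IsComodule.restrict (hM : M.IsComodule) {K : Submodule k M.X} (hK : M.IsSubcomodule K) :
    (M.restrict hK).IsComodule :=
  hM.of_disjoint_ker hM (isHom_subtype hK) (isHom_subtype hK)
    (disjoint_self.2 K.ker_subtype)

theorem isHom_fst : IsHom (M.dsum N) M (fst k M.X N.X) := by
  unfold IsHom dsum
  simp [comp_add, ← comp_assoc, ← rTensor_comp]

theorem isHom_snd : IsHom (M.dsum N) N (snd k M.X N.X) := by
  unfold IsHom dsum
  simp [comp_add, ← comp_assoc, ← rTensor_comp]

theorem isHom_inl : IsHom M (M.dsum N) (inl k M.X N.X) := by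
  unfold IsHom dsum
  simp [add_comp, comp_assoc]

theorem isHom_inr : IsHom N (M.dsum N) (inr k M.X N.X) := by
  unfold IsHom dsum
  simp [add_comp, comp_assoc]

theorem isHom_coprod {f : M.X →ₗ[k] L.X} {g : N.X →ₗ[k] L.X} (hf : IsHom M L f)
    (hg : IsHom N L g) : IsHom (M.dsum N) L (f.coprod g) := by
  unfold IsHom dsum at *
  simp only [comp_add, ← comp_assoc, ← rTensor_comp, coprod_inl, coprod_inr, ← hf, ← hg]
  rw [comp_assoc, comp_assoc, ← comp_add]
  rfl

theorem IsComodule.dsum (hM : M.IsComodule) (hN : N.IsComodule) : (M.dsum N).IsComodule :=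
  have hdisj : Disjoint (ker (fst k M.X N.X)) (ker (snd k M.X N.X)) := by
    rw [ker_fst, ker_snd]
    exact isCompl_range_inl_inr.symm.disjoint
  hM.of_disjoint_ker hN isHom_fst isHom_snd hdisj

theorem isComodule_regular : (regular k H).IsComodule := by
  unfold IsComodule regular
  exact ⟨coassoc_symm.symm, by ext; simp⟩

theorem isComodule_unit : (unit k H).IsComodule := by
  unfold IsComodule unit
  exact ⟨by ext; simp [Algebra.TensorProduct.one_def], by ext; simp⟩

end Constructions

section Tensor

theorem IsComodule.tensor (hM : M.IsComodule) (hN : N.IsComodule) : (M.tensor N).IsComodule := by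
  have hcomul := mulTensor_comp_map_lTensor (X := M.X) (Y := N.X) (Bialgebra.comulAlgHom k H)
  have hcounit := mulTensor_comp_map_lTensor (X := M.X) (Y := N.X) (Bialgebra.counitAlgHom k H)
  simp only [Bialgebra.toLinearMap_comulAlgHom, Bialgebra.toLinearMap_counitAlgHom]
    at hcomul hcounit
  constructor
  · calc (mulTensor M.X N.X H ∘ₗ TensorProduct.map M.ρ N.ρ).rTensor H ∘ₗ
          mulTensor M.X N.X H ∘ₗ TensorProduct.map M.ρ N.ρ
      _ = (mulTensor M.X N.X H).rTensor H ∘ₗ mulTensor (M.X ⊗[k] H) (N.X ⊗[k] H) H ∘ₗ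
          TensorProduct.map (M.ρ.rTensor H ∘ₗ M.ρ) (N.ρ.rTensor H ∘ₗ N.ρ) := by
        rw [rTensor_comp, TensorProduct.map_comp, ← comp_assoc _ _ (mulTensor _ _ _),
          mulTensor_comp_map_rTensor]
        rfl
      _ = (TensorProduct.assoc k (M.X ⊗[k] N.X) H H).symm.toLinearMap ∘ₗ
          mulTensor M.X N.X (H ⊗[k] H) ∘ₗ
          TensorProduct.map (comul.lTensor M.X ∘ₗ M.ρ) (comul.lTensor N.X ∘ₗ N.ρ) := by
        rw [hM.1, hN.1, TensorProduct.map_comp, ← comp_assoc _ _ (mulTensor _ _ _),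
          ← comp_assoc _ _ (rTensor _ _), mulTensor_assoc]
        rfl
      _ = (TensorProduct.assoc k (M.X ⊗[k] N.X) H H).symm.toLinearMap ∘ₗ
          comul.lTensor (M.X ⊗[k] N.X) ∘ₗ mulTensor M.X N.X H ∘ₗ
          TensorProduct.map M.ρ N.ρ := by
        rw [TensorProduct.map_comp, ← comp_assoc _ _ (mulTensor _ _ _), hcomul]
        rfl
  · calc (TensorProduct.rid k (M.X ⊗[k] N.X)).toLinearMap ∘ₗ counit.lTensor (M.X ⊗[k] N.X) ∘ₗ
          mulTensor M.X N.X H ∘ₗ TensorProduct.map M.ρ N.ρ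
      _ = (TensorProduct.rid k (M.X ⊗[k] N.X)).toLinearMap ∘ₗ mulTensor M.X N.X k ∘ₗ
          TensorProduct.map (counit.lTensor M.X ∘ₗ M.ρ) (counit.lTensor N.X ∘ₗ N.ρ) := by
        rw [TensorProduct.map_comp, ← comp_assoc _ _ (mulTensor _ _ _), hcounit]
        rfl
      _ = LinearMap.id := by
        rw [← comp_assoc, rid_comp_mulTensor, ← TensorProduct.map_comp, hM.2, hN.2,
          TensorProduct.map_id]

theorem IsComodule.tpow (hM : M.IsComodule) : ∀ n, (M.tpow n).IsComodule
  | 0 => isComodule_unit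
  | 1 => hM
  | n + 2 => (hM.tpow (n + 1)).tensor hM

instance finiteDimensional_dsum [FiniteDimensional k M.X] [FiniteDimensional k N.X] :
    FiniteDimensional k (M.dsum N).X :=
  inferInstanceAs (FiniteDimensional k (M.X × N.X))

instance finiteDimensional_tensor [FiniteDimensional k M.X] [FiniteDimensional k N.X] :
    FiniteDimensional k (M.tensor N).X :=
  inferInstanceAs (FiniteDimensional k (M.X ⊗[k] N.X))

instance finiteDimensional_unit : FiniteDimensional k (unit k H).X :=
  inferInstanceAs (FiniteDimensional k k)

instance finiteDimensional_restrict [FiniteDimensional k M.X] {K : Submodule k M.X}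
    (hK : M.IsSubcomodule K) : FiniteDimensional k (M.restrict hK).X :=
  inferInstanceAs (FiniteDimensional k K)

instance finiteDimensional_tpow [hM : FiniteDimensional k M.X] (n : ℕ) :
    FiniteDimensional k (M.tpow n).X :=
  match n with
  | 0 => finiteDimensional_unit
  | 1 => hM
  | n + 2 =>
    have : FiniteDimensional k (M.tpow (n + 1)).X := finiteDimensional_tpow (n + 1)
    finiteDimensional_tensor

end Tensor

section Splitting

theorem exists_equiv_dsum_of_injective (hH : IsCosemisimple k H) (hN : N.IsComodule)
    {f : S.X →ₗ[k] N.X} (hf : IsHom S N f) (hinj : Function.Injective f) :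
    ∃ (K : Submodule k N.X) (hK : N.IsSubcomodule K) (e : (S.X × K) ≃ₗ[k] N.X),
      IsHom (S.dsum (N.restrict hK)) N e.toLinearMap ∧ ∀ s, e (s, 0) = f s := by
  obtain ⟨K, hK, hcompl⟩ := hH N hN (range f) hf.isSubcomodule_range
  let e : (S.X × K) ≃ₗ[k] N.X :=
    ((LinearEquiv.ofInjective f hinj).prodCongr (.refl k K)).trans
      ((range f).prodEquivOfIsCompl K hcompl)
  have he : e.toLinearMap = f.coprod K.subtype := by ext <;> simp [e]
  exact ⟨K, hK, e, he ▸ isHom_coprod hf (isHom_subtype hK), fun s => by simp [e]⟩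

theorem exists_retraction_of_injective (hH : IsCosemisimple k H) (hN : N.IsComodule)
    {f : S.X →ₗ[k] N.X} (hf : IsHom S N f) (hinj : Function.Injective f) :
    ∃ p : N.X →ₗ[k] S.X, IsHom N S p ∧ p ∘ₗ f = LinearMap.id := by
  obtain ⟨K, hK, e, he, hef⟩ := exists_equiv_dsum_of_injective hH hN hf hinj
  exact ⟨fst k S.X K ∘ₗ e.symm.toLinearMap, isHom_fst.comp he.symm,
    LinearMap.ext fun s => by simp [← hef]⟩

theorem directSummand_of_surjective (hH : IsCosemisimple k H) (hN : N.IsComodule)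
    {p : N.X →ₗ[k] S.X} (hp : IsHom N S p) (hsurj : Function.Surjective p) :
    DirectSummand S N := by
  obtain ⟨K, hK, hcompl⟩ := hH N hN (ker p) hp.isSubcomodule_ker
  let e : K ≃ₗ[k] S.X :=
    (p.kerComplementEquivRange hcompl.symm).trans (.ofTop _ (range_eq_top.2 hsurj))
  have he : IsHom (N.restrict hK) S e.toLinearMap := hp.comp (isHom_subtype hK)
  exact ⟨K.subtype ∘ₗ e.symm.toLinearMap, p, (isHom_subtype hK).comp he.symm, hp,
    LinearMap.ext fun s => e.apply_symm_apply s⟩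

theorem DirectSummand.exists_iso_dsum (hH : IsCosemisimple k H) (hM : M.IsComodule)
    (hS : DirectSummand S M) :
    ∃ (K : Submodule k M.X) (hK : M.IsSubcomodule K), Iso M (S.dsum (M.restrict hK)) :=
  let ⟨_, _, hi, _, hpi⟩ := hS
  let ⟨K, hK, e, he, _⟩ := exists_equiv_dsum_of_injective hH hM hi (injective_of_comp_eq_id _ _ hpi)
  ⟨K, hK, e.symm, he.symm⟩

theorem Iso.directSummand (h : Iso M (S.dsum T)) : DirectSummand S M :=
  let ⟨e, he⟩ := h
  ⟨e.symm.toLinearMap ∘ₗ inl k S.X T.X, fst k S.X T.X ∘ₗ e.toLinearMap,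
    he.symm.comp isHom_inl, isHom_fst.comp he,
    LinearMap.ext fun s => congrArg Prod.fst (e.apply_symm_apply (s, 0))⟩

end Splitting

section Simple

theorem IsSimple.injective_of_ne_zero (hS : S.IsSimple) {f : S.X →ₗ[k] M.X} (hf : IsHom S M f)
    (h : f ≠ 0) : Function.Injective f :=
  ker_eq_bot.1 <| (hS.2.2.2 _ hf.isSubcomodule_ker).resolve_right fun htop => h (ker_eq_top.1 htop)

theorem IsSimple.surjective_of_ne_zero (hS : S.IsSimple) {f : M.X →ₗ[k] S.X} (hf : IsHom M S f)
    (h : f ≠ 0) : Function.Surjective f :=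
  range_eq_top.1 <| (hS.2.2.2 _ hf.isSubcomodule_range).resolve_left fun hbot =>
    h (range_eq_bot.1 hbot)

theorem exists_isSimple_restrict (hM : M.IsComodule) [FiniteDimensional k M.X] [Nontrivial M.X] :
    ∃ (K : Submodule k M.X) (hK : M.IsSubcomodule K), (M.restrict hK).IsSimple := by
  obtain ⟨K, ⟨hK, hK0⟩, hmin⟩ := exists_minimal_of_wellFoundedLT
    (fun K : Submodule k M.X => M.IsSubcomodule K ∧ K ≠ ⊥) ⟨⊤, M.isSubcomodule_top, top_ne_bot⟩
  refine ⟨K, hK, hM.restrict hK, K.nontrivial_iff_ne_bot.2 hK0, inferInstance, fun L hL => ?_⟩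
  have hLK : L.map K.subtype ≤ K := K.map_subtype_le L
  have hinj := Submodule.map_injective_of_injective K.subtype_injective
  by_cases h0 : L.map K.subtype = ⊥
  · exact .inl (hinj (h0.trans (Submodule.map_bot _).symm))
  · have := hmin ⟨(isHom_subtype hK).isSubcomodule_map hL, h0⟩ hLK
    exact .inr (hinj ((hLK.antisymm this).trans K.map_subtype_top.symm))

end Simple

theorem IsSimple.range_dualAct_eq_top [IsAlgClosed k] (hS : S.IsSimple) :
    range S.dualAct = ⊤ := by
  obtain ⟨hcomod, hnontriv, hfin, hsub⟩ := hS
  obtain ⟨hmul, hone⟩ := isComodule_iff S |>.1 hcomod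
  let 𝒜 : Subalgebra k (End k S.X) := (range S.dualAct).toSubalgebra ⟨counit, hone⟩ <| by
    rintro _ _ ⟨b, rfl⟩ ⟨c, rfl⟩
    exact ⟨_, hmul b c⟩
  have : IsSimpleModule 𝒜 S.X := (isSimpleModule_iff _ _).2
    { eq_bot_or_eq_top := fun W => by
        rw [← Submodule.restrictScalars_eq_bot_iff k, ← Submodule.restrictScalars_eq_top_iff k]
        exact hsub _ <| isSubcomodule_iff.2 fun b x hx => W.smul_mem (⟨_, b, rfl⟩ : 𝒜) hx }
  exact congrArg Subalgebra.toSubmodule (subalgebra_end_eq_top_of_isSimpleModule 𝒜)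

section Coefficients

/-- The matrix coefficient `(φ ⊗ id) (ρ m)` of a comodule. -/
noncomputable def matrixCoeff (M : Comod k H) : Dual k M.X →ₗ[k] M.X →ₗ[k] H :=
  M.ρ.lcomp k H ∘ₗ sliceLeft M.X

theorem matrixCoeff_apply (φ : Dual k M.X) (m : M.X) :
    M.matrixCoeff φ m = sliceLeft M.X φ (M.ρ m) := rfl

theorem apply_matrixCoeff (b : Dual k H) (φ : Dual k M.X) (m : M.X) :
    b (M.matrixCoeff φ m) = φ (M.dualAct b m) :=
  apply_sliceLeft b φ (M.ρ m)

theorem apply_dualAct_regular (b c : Dual k H) (h : H) :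
    c ((regular k H).dualAct b h) = (toConv c * toConv b).ofConv h := by
  rw [convMul_apply]
  exact LinearMap.congr_fun (f := c ∘ₗ sliceRight H b)
    (g := mul' k k ∘ₗ TensorProduct.map c b) (by ext; simp [mul_comm]) (comul h)

theorem isHom_matrixCoeff (hM : M.IsComodule) (φ : Dual k M.X) :
    IsHom M (regular k H) (M.matrixCoeff φ) :=
  isHom_iff.2 fun b m => by
    refine eval_apply_injective (V := H) k (LinearMap.ext fun c => ?_)
    calc c ((regular k H).dualAct b (M.matrixCoeff φ m))
      _ = φ (M.dualAct (toConv c * toConv b).ofConv m) := by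
        rw [apply_dualAct_regular, apply_matrixCoeff]
      _ = c (M.matrixCoeff φ (M.dualAct b m)) := by
        rw [(isComodule_iff M).1 hM |>.1, apply_matrixCoeff, Module.End.mul_apply]

theorem IsHom.matrixCoeff_apply {f : M.X →ₗ[k] N.X} (hf : IsHom M N f) (ψ : Dual k N.X) (m : M.X) :
    N.matrixCoeff ψ (f m) = M.matrixCoeff (ψ ∘ₗ f) m := by
  rw [Comod.matrixCoeff_apply, Comod.matrixCoeff_apply, ← sliceLeft_rTensor]
  exact congr(sliceLeft N.X ψ ($hf m))

/-- The coefficient space of a comodule: the span in `H` of all its matrix coefficients. -/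
noncomputable def coeffSpace (M : Comod k H) : Submodule k H :=
  Submodule.map₂ M.matrixCoeff ⊤ ⊤

theorem matrixCoeff_mem_coeffSpace (φ : Dual k M.X) (m : M.X) :
    M.matrixCoeff φ m ∈ M.coeffSpace :=
  Submodule.apply_mem_map₂ _ trivial trivial

theorem coeffSpace_le_iff {C : Submodule k H} :
    M.coeffSpace ≤ C ↔ ∀ φ m, M.matrixCoeff φ m ∈ C := by
  simp [coeffSpace, Submodule.map₂_le]

instance finiteDimensional_coeffSpace [FiniteDimensional k M.X] :
    FiniteDimensional k M.coeffSpace :=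
  Module.Finite.iff_fg.2 (Module.Finite.fg_top.map₂ _ Module.Finite.fg_top)

theorem finrank_coeffSpace_eq_finrank_range_dualAct (M : Comod k H) :
    finrank k M.coeffSpace = finrank k (range M.dualAct) := by
  have hann : M.coeffSpace.dualAnnihilator = ker M.dualAct := by
    ext b
    refine ⟨fun hb => LinearMap.ext fun m => eval_apply_injective k (LinearMap.ext fun φ => ?_),
      fun hb => (Submodule.mem_dualAnnihilator b).2 fun h hh => ?_⟩
    · refine (apply_matrixCoeff b φ m).symm.trans ?_
      simpa using (Submodule.mem_dualAnnihilator b).1 hb _ (matrixCoeff_mem_coeffSpace φ m)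
    · refine (coeffSpace_le_iff (C := ker b)).2 (fun φ m => ?_) hh
      rw [mem_ker, apply_matrixCoeff, mem_ker.1 hb, LinearMap.zero_apply, map_zero]
  calc finrank k M.coeffSpace = finrank k (Dual k M.coeffSpace) := Subspace.dual_finrank_eq.symm
    _ = finrank k (Dual k H ⧸ ker M.dualAct) :=
      hann ▸ (Subspace.quotAnnihilatorEquiv M.coeffSpace).finrank_eq.symm
    _ = finrank k (range M.dualAct) := M.dualAct.quotKerEquivRange.finrank_eq

theorem IsSimple.finrank_coeffSpace [IsAlgClosed k] (hS : S.IsSimple) :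
    finrank k S.coeffSpace = finrank k S.X ^ 2 := by
  have := hS.2.2.1
  rw [finrank_coeffSpace_eq_finrank_range_dualAct, hS.range_dualAct_eq_top, finrank_top,
    finrank_linearMap, sq]

theorem IsHom.coeffSpace_le_of_injective {f : M.X →ₗ[k] N.X} (hf : IsHom M N f)
    (hinj : Function.Injective f) : M.coeffSpace ≤ N.coeffSpace :=
  coeffSpace_le_iff.2 fun φ m => by
    obtain ⟨ψ, rfl⟩ := dualMap_surjective_of_injective hinj φ
    exact (hf.matrixCoeff_apply ψ m) ▸ matrixCoeff_mem_coeffSpace ψ (f m)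

theorem Iso.coeffSpace_eq (h : Iso M N) : M.coeffSpace = N.coeffSpace :=
  let ⟨e, he⟩ := h
  (he.coeffSpace_le_of_injective e.injective).antisymm
    (he.symm.coeffSpace_le_of_injective e.symm.injective)

theorem coeffSpace_le_sup {f : M.X →ₗ[k] L.X} {g : N.X →ₗ[k] L.X} (hf : IsHom M L f)
    (hg : IsHom N L g) (h : ∀ x, ∃ m n, f m + g n = x) :
    L.coeffSpace ≤ M.coeffSpace ⊔ N.coeffSpace :=
  coeffSpace_le_iff.2 fun φ x => by
    obtain ⟨m, n, rfl⟩ := h x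
    rw [map_add, hf.matrixCoeff_apply, hg.matrixCoeff_apply]
    exact Submodule.add_mem_sup (matrixCoeff_mem_coeffSpace _ _) (matrixCoeff_mem_coeffSpace _ _)

theorem coeffSpace_dsum : (M.dsum N).coeffSpace = M.coeffSpace ⊔ N.coeffSpace :=
  le_antisymm (coeffSpace_le_sup isHom_inl isHom_inr fun x => ⟨x.1, x.2, Prod.fst_add_snd x⟩)
    (sup_le (isHom_inl.coeffSpace_le_of_injective inl_injective)
      (isHom_inr.coeffSpace_le_of_injective inr_injective))

theorem coeffSpace_unit : (unit k H).coeffSpace = 1 := by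
  have hcoeff : (unit k H).matrixCoeff LinearMap.id (1 : k) = 1 :=
    (sliceLeft_tmul _ _ _).trans (one_smul k 1)
  rw [Submodule.one_eq_span]
  refine le_antisymm (coeffSpace_le_iff.2 fun φ c => ?_) ?_
  · exact Submodule.mem_span_singleton.2 ⟨φ c, (sliceLeft_tmul φ c 1).symm⟩
  · rw [Submodule.span_singleton_le_iff_mem, ← hcoeff]
    exact matrixCoeff_mem_coeffSpace _ _

theorem coeffSpace_tensor [FiniteDimensional k M.X] [FiniteDimensional k N.X] :
    (M.tensor N).coeffSpace = M.coeffSpace * N.coeffSpace :=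
  map₂_dual_tensorProduct fun φ ψ m n => sliceLeft_mulTensor φ ψ (M.ρ m) (N.ρ n)

theorem coeffSpace_tpow [FiniteDimensional k M.X] (n : ℕ) :
    (M.tpow n).coeffSpace = M.coeffSpace ^ n :=
  match n with
  | 0 => coeffSpace_unit
  | 1 => (pow_one _).symm
  | n + 2 => coeffSpace_tensor.trans (by rw [coeffSpace_tpow (n + 1), ← pow_succ])

end Coefficients

section Disjoint

theorem isSubcomodule_coeffSpace (hM : M.IsComodule) :
    (regular k H).IsSubcomodule M.coeffSpace :=
  isSubcomodule_iff.2 fun b => by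
    let f : H →ₗ[k] H := (regular k H).dualAct b
    refine coeffSpace_le_iff (C := M.coeffSpace.comap f) |>.2 fun φ m => ?_
    have hf : f (M.matrixCoeff φ m) = M.matrixCoeff φ (M.dualAct b m) :=
      isHom_iff.1 (isHom_matrixCoeff hM φ) b m
    exact Submodule.mem_comap.2 (hf ▸ matrixCoeff_mem_coeffSpace _ _)

theorem exists_comp_matrixCoeff_ne_zero {Y : Type*} [AddCommGroup Y] [Module k Y] {f : H →ₗ[k] Y}
    {h : H} (hh : h ∈ M.coeffSpace) (hf : f h ≠ 0) : ∃ φ, f ∘ₗ M.matrixCoeff φ ≠ 0 := by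
  by_contra! hzero
  exact hf <| coeffSpace_le_iff (C := ker f) |>.2 (fun φ m => congr($(hzero φ) m)) hh

theorem IsSimple.exists_injective_of_not_disjoint (hH : IsCosemisimple k H) (hS : S.IsSimple)
    {I : Submodule k H} (hI : (regular k H).IsSubcomodule I) (h : ¬ Disjoint S.coeffSpace I) :
    ∃ g : S.X →ₗ[k] H, IsHom S (regular k H) g ∧ Function.Injective g ∧ ∀ s, g s ∈ I := by
  obtain ⟨r, hr, hrI⟩ : ∃ r : H →ₗ[k] I, IsHom (regular k H) ((regular k H).restrict hI) r ∧
      r ∘ₗ I.subtype = LinearMap.id :=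
    exists_retraction_of_injective hH isComodule_regular (isHom_subtype hI) I.subtype_injective
  obtain ⟨x, ⟨hxS, hxI⟩, hx0⟩ := (Submodule.ne_bot_iff _).1 (disjoint_iff.not.1 h)
  have hrx : r x ≠ 0 := fun h0 =>
    hx0 (congrArg Subtype.val (congr($hrI ⟨x, hxI⟩).symm.trans h0))
  obtain ⟨φ, hφ⟩ := exists_comp_matrixCoeff_ne_zero hxS hrx
  have hrφ : IsHom S ((regular k H).restrict hI) (r ∘ₗ S.matrixCoeff φ) :=
    hr.comp (isHom_matrixCoeff hS.1 φ)
  exact ⟨I.subtype ∘ₗ r ∘ₗ S.matrixCoeff φ, (isHom_subtype hI).comp hrφ,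
    I.subtype_injective.comp (hS.injective_of_ne_zero hrφ hφ), fun s => Subtype.property _⟩

theorem IsSimple.directSummand_of_not_disjoint (hH : IsCosemisimple k H) (hS : S.IsSimple)
    (hN : N.IsComodule) (h : ¬ Disjoint S.coeffSpace N.coeffSpace) : DirectSummand S N := by
  obtain ⟨g, hg, hginj, hgN⟩ :=
    hS.exists_injective_of_not_disjoint hH (isSubcomodule_coeffSpace hN) h
  obtain ⟨p, hp, hpg⟩ : ∃ p : H →ₗ[k] S.X, IsHom (regular k H) S p ∧ p ∘ₗ g = LinearMap.id :=
    exists_retraction_of_injective hH isComodule_regular hg hginj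
  have := hS.2.1
  obtain ⟨y, hy⟩ := exists_ne (0 : S.X)
  have hpy : p (g y) ≠ 0 := fun h0 => hy (congr($hpg y).symm.trans h0)
  obtain ⟨ψ, hψ⟩ := exists_comp_matrixCoeff_ne_zero (hgN y) hpy
  have hpN : IsHom N S (p ∘ₗ N.matrixCoeff ψ) := hp.comp (isHom_matrixCoeff hN ψ)
  exact directSummand_of_surjective hH hN hpN (hS.surjective_of_ne_zero hpN hψ)

end Disjoint

section LocallyFinite

theorem exists_isSubcomodule_ge (hM : M.IsComodule) (V : Submodule k M.X)
    [hVfin : FiniteDimensional k V] : ∃ K, M.IsSubcomodule K ∧ FiniteDimensional k K ∧ V ≤ K := by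
  obtain ⟨hmul, hone⟩ := (isComodule_iff M).1 hM
  refine ⟨Submodule.map₂ M.dualAct ⊤ V, isSubcomodule_iff.2 fun b => ?_, ?_, fun v hv => ?_⟩
  · refine Submodule.map₂_le (r := (Submodule.map₂ M.dualAct ⊤ V).comap (M.dualAct b)) |>.2
      fun c _ v hv => ?_
    have := Submodule.apply_mem_map₂ M.dualAct
      (Submodule.mem_top (x := (toConv b * toConv c).ofConv)) hv
    rwa [hmul] at this
  · refine Submodule.fg_induction (motive := fun V _ =>
      FiniteDimensional k (Submodule.map₂ M.dualAct ⊤ V)) (fun v => ?_) (fun _ _ _ _ hV hW => ?_)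
      V (Module.Finite.iff_fg.1 hVfin)
    · rw [Submodule.map₂_span_singleton_eq_map_flip, Submodule.map_top]
      exact finiteDimensional_range_sliceRight_flip (M.ρ v)
    · rw [Submodule.map₂_sup_right]
      infer_instance
  · have := Submodule.apply_mem_map₂ M.dualAct (Submodule.mem_top (x := counit)) hv
    rwa [hone] at this

theorem matrixCoeff_regular_counit (h : H) :
    (regular k H).matrixCoeff (counit (R := k) (A := H)) h = h :=
  (congrArg (TensorProduct.lid k H) (rTensor_counit_comul h)).trans (one_smul k h)

theorem exists_coeffSpace_ge (V : Submodule k H) [hV : FiniteDimensional k V] :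
    ∃ M : Comod k H, M.IsComodule ∧ FiniteDimensional k M.X ∧ V ≤ M.coeffSpace := by
  obtain ⟨K, hK, hfin, hVK⟩ :=
    exists_isSubcomodule_ge (M := regular k H) isComodule_regular V (hVfin := hV)
  refine ⟨(regular k H).restrict hK, isComodule_regular.restrict hK, hfin, fun v hv => ?_⟩
  have hcoeff := (isHom_subtype hK).matrixCoeff_apply (counit (R := k) (A := H)) ⟨v, hVK hv⟩
  exact (hcoeff.symm.trans (matrixCoeff_regular_counit v)) ▸ matrixCoeff_mem_coeffSpace _ _

end LocallyFinite

section Multiplicity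

theorem coeffSpace_eq_bot [Subsingleton M.X] : M.coeffSpace = ⊥ :=
  eq_bot_iff.2 <| coeffSpace_le_iff.2 fun φ m => by simp [Subsingleton.elim m 0]

theorem exists_isSimple_iso_dsum (hH : IsCosemisimple k H) (hM : M.IsComodule)
    [FiniteDimensional k M.X] [Nontrivial M.X] :
    ∃ S T : Comod k H, S.IsSimple ∧ T.IsComodule ∧ FiniteDimensional k T.X ∧
      Iso M (S.dsum T) := by
  obtain ⟨N, hN, hsimple⟩ := exists_isSimple_restrict hM
  obtain ⟨K, hK, e, he, -⟩ :=
    exists_equiv_dsum_of_injective hH hM (isHom_subtype hN) N.subtype_injective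
  exact ⟨_, _, hsimple, hM.restrict hK, inferInstance, e.symm, he.symm⟩

theorem DirectSummand.coeffSpace_le (h : DirectSummand S M) : S.coeffSpace ≤ M.coeffSpace :=
  let ⟨_, _, hi, _, hpi⟩ := h
  hi.coeffSpace_le_of_injective (injective_of_comp_eq_id _ _ hpi)

open Classical in
theorem IsSimple.finrank_coeffSpace_dsum [IsAlgClosed k] (hH : IsCosemisimple k H)
    (hS : S.IsSimple) (hT : T.IsComodule) [FiniteDimensional k T.X] :
    finrank k (S.dsum T).coeffSpace =
      (if DirectSummand S T then 0 else finrank k S.X ^ 2) + finrank k T.coeffSpace := by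
  have := hS.2.2.1
  rw [coeffSpace_dsum]
  split_ifs with h
  · rw [sup_eq_right.2 h.coeffSpace_le, zero_add]
  · have hdisj : Disjoint S.coeffSpace T.coeffSpace :=
      not_imp_comm.1 (hS.directSummand_of_not_disjoint hH hT) h
    rw [← hS.finrank_coeffSpace, ← Submodule.finrank_sup_add_finrank_inf_eq, hdisj.eq_bot,
      finrank_bot, add_zero]

end Multiplicity

end Comod

namespace GrSemiring

open Module LinearMap Comod

variable {k : Type} [Field k]

section Class

variable {H : Type} [Ring H] [HopfAlgebra k H] (G : GrSemiring k H) {M N S T : Comod k H}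

theorem cls_eq_add_of_iso_dsum (hM : M.IsComodule) (hS : S.IsComodule) (hT : T.IsComodule)
    [FiniteDimensional k M.X] [FiniteDimensional k S.X] [FiniteDimensional k T.X]
    (h : Iso M (S.dsum T)) : G.cls M = G.cls S + G.cls T :=
  (G.cls_iso _ _ hM (hS.dsum hT) inferInstance inferInstance h).trans
    (G.cls_dsum _ _ hS hT inferInstance inferInstance)

theorem exists_iso_dsum_of_cls_eq_add (hM : M.IsComodule) [FiniteDimensional k M.X] {a b : G.R}
    (h : G.cls M = a + b) :
    ∃ S T : Comod k H, (S.IsComodule ∧ FiniteDimensional k S.X ∧ G.cls S = a) ∧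
      (T.IsComodule ∧ FiniteDimensional k T.X ∧ G.cls T = b) ∧ Iso M (S.dsum T) := by
  obtain ⟨S, hS, _, rfl⟩ := G.cls_surj a
  obtain ⟨T, hT, _, rfl⟩ := G.cls_surj b
  refine ⟨S, T, ⟨hS, inferInstance, rfl⟩, ⟨hT, inferInstance, rfl⟩, ?_⟩
  exact G.cls_inj _ _ hM (hS.dsum hT) inferInstance inferInstance
    (h.trans (G.cls_dsum _ _ hS hT inferInstance inferInstance).symm)

theorem subsingleton_of_isAddUnit_cls (hM : M.IsComodule) [FiniteDimensional k M.X]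
    (h : IsAddUnit (G.cls M)) : Subsingleton M.X := by
  obtain ⟨r, hr⟩ := isAddUnit_iff_exists_neg.1 h
  obtain ⟨N, hN, _, rfl⟩ := G.cls_surj r
  have hMN : G.cls (M.dsum N) = 0 :=
    (G.cls_dsum M N hM hN inferInstance inferInstance).trans hr
  obtain ⟨e, -⟩ : Iso (M.dsum N) ((M.dsum N).dsum (M.dsum N)) :=
    have hcomod := hM.dsum hN
    G.cls_inj _ _ hcomod (hcomod.dsum hcomod) inferInstance inferInstance <| by
      rw [G.cls_dsum _ _ hcomod hcomod inferInstance inferInstance, hMN, add_zero]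
  have hfin : finrank k (M.X × N.X) = finrank k ((M.X × N.X) × (M.X × N.X)) := e.finrank_eq
  simp only [finrank_prod] at hfin
  exact finrank_zero_iff (R := k).1 (by lia)

theorem cls_eq_zero (hM : M.IsComodule) [Subsingleton M.X] : G.cls M = 0 := by
  obtain ⟨Z, hZ, _, hZ0⟩ := G.cls_surj 0
  let e : Z.X ≃ₗ[k] M.X × Z.X := LinearEquiv.ofBijective (inr k M.X Z.X)
    ⟨inr_injective, fun x => ⟨x.2, Prod.ext (Subsingleton.elim _ _) rfl⟩⟩
  have hiso : Iso Z (M.dsum Z) := ⟨e, isHom_inr⟩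
  have := G.cls_eq_add_of_iso_dsum hZ hM hZ hiso
  rwa [hZ0, add_zero, eq_comm] at this

theorem isAddUnit_cls_iff (hM : M.IsComodule) [FiniteDimensional k M.X] :
    IsAddUnit (G.cls M) ↔ Subsingleton M.X :=
  ⟨G.subsingleton_of_isAddUnit_cls hM, fun _ => G.cls_eq_zero hM ▸ isAddUnit_zero⟩

theorem directSummand_iff (hH : IsCosemisimple k H) (hS : S.IsComodule) (hM : M.IsComodule)
    [FiniteDimensional k S.X] [FiniteDimensional k M.X] :
    DirectSummand S M ↔ ∃ t, G.cls M = G.cls S + t := by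
  refine ⟨fun h => ?_, fun ⟨t, ht⟩ => ?_⟩
  · obtain ⟨K, hK, e⟩ := h.exists_iso_dsum hH hM
    exact ⟨_, G.cls_eq_add_of_iso_dsum hM hS (hM.restrict hK) e⟩
  · obtain ⟨T, hT, _, rfl⟩ := G.cls_surj t
    refine Iso.directSummand (T := T) ?_
    exact G.cls_inj _ _ hM (hS.dsum hT) inferInstance inferInstance
      (ht.trans (G.cls_dsum _ _ hS hT inferInstance inferInstance).symm)

theorem addIrreducible_cls (hM : M.IsSimple) : AddIrreducible (G.cls M) := by
  obtain ⟨hcomod, _, _, hsub⟩ := hM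
  refine ⟨fun h => not_subsingleton M.X ((G.isAddUnit_cls_iff hcomod).1 h), fun a b hab => ?_⟩
  obtain ⟨S, T, ⟨hS, _, rfl⟩, ⟨hT, _, rfl⟩, e, he⟩ := G.exists_iso_dsum_of_cls_eq_add hcomod hab
  rw [G.isAddUnit_cls_iff hS, G.isAddUnit_cls_iff hT]
  let i : S.X →ₗ[k] M.X := e.symm.toLinearMap ∘ₗ inl k S.X T.X
  have hi : IsHom S M i := he.symm.comp isHom_inl
  refine (hsub _ hi.isSubcomodule_range).imp (fun hbot => ?_) (fun htop => ?_)
  · have hi0 := range_eq_bot.1 hbot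
    refine subsingleton_of_forall_eq 0 fun s => ?_
    exact inl_injective (e.symm.injective ((congr($hi0 s)).trans (congr($hi0 0)).symm))
  · refine subsingleton_of_forall_eq 0 fun t => ?_
    obtain ⟨s, hs⟩ := range_eq_top.1 htop (e.symm (0, t))
    exact (congrArg Prod.snd (e.symm.injective hs)).symm

theorem isSimple_of_addIrreducible_cls (hH : IsCosemisimple k H) (hM : M.IsComodule)
    [FiniteDimensional k M.X] (h : AddIrreducible (G.cls M)) : M.IsSimple := by
  have hnontriv : Nontrivial M.X :=
    not_subsingleton_iff_nontrivial.1 fun hM0 => h.1 ((G.isAddUnit_cls_iff hM).2 hM0)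
  refine ⟨hM, hnontriv, inferInstance, fun N hN => ?_⟩
  obtain ⟨K, hK, e, he, heN⟩ :=
    exists_equiv_dsum_of_injective hH hM (isHom_subtype hN) N.subtype_injective
  have hadd := G.cls_eq_add_of_iso_dsum hM (hM.restrict hN) (hM.restrict hK) ⟨e.symm, he.symm⟩
  have := h.2 hadd
  rw [G.isAddUnit_cls_iff (hM.restrict hN), G.isAddUnit_cls_iff (hM.restrict hK)] at this
  refine this.imp (Submodule.subsingleton_iff_eq_bot.1) fun (hK0 : Subsingleton K) =>
    eq_top_iff.2 fun m _ => ?_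
  obtain ⟨⟨n, c⟩, rfl⟩ := e.surjective m
  rw [Subsingleton.elim c 0, heN]
  exact n.2

theorem isSimple_iff (hH : IsCosemisimple k H) (hM : M.IsComodule) [FiniteDimensional k M.X] :
    M.IsSimple ↔ AddIrreducible (G.cls M) :=
  ⟨G.addIrreducible_cls, G.isSimple_of_addIrreducible_cls hH hM⟩

theorem cls_tpow (hM : M.IsComodule) [FiniteDimensional k M.X] (n : ℕ) :
    G.cls (M.tpow n) = G.cls M ^ n :=
  match n with
  | 0 => G.cls_one.trans (pow_zero _).symm
  | 1 => (pow_one _).symm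
  | n + 2 => by
    rw [pow_succ, ← cls_tpow hM (n + 1)]
    exact G.cls_tensor _ _ (hM.tpow (n + 1)) hM inferInstance inferInstance

end Class

section Comparison

variable {A H : Type} [Ring A] [Ring H] [HopfAlgebra k A] [HopfAlgebra k H]
  {GH : GrSemiring k H} {GA : GrSemiring k A}

/-- An isomorphism of Grothendieck semirings is dimension-preserving if it preserves the
dimensions of simple comodules: it is then an isomorphism of measured semirings
`(R₊(H), d_H) ≅ (R₊(A), d_A)`, as in the definition of a quantum function algebra. -/
def PreservesDim (f : GH.R ≃+* GA.R) : Prop :=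
  ∀ M : Comod k H, M.IsSimple → ∀ M' : Comod k A, M'.IsComodule → FiniteDimensional k M'.X →
    GA.cls M' = f (GH.cls M) → finrank k M'.X = finrank k M.X

theorem directSummand_congr (hA : IsCosemisimple k A) (hH : IsCosemisimple k H)
    (f : GH.R ≃+* GA.R) {S M : Comod k H} {S' M' : Comod k A} (hS : S.IsComodule)
    (hM : M.IsComodule) (hS' : S'.IsComodule) (hM' : M'.IsComodule) [FiniteDimensional k S.X]
    [FiniteDimensional k M.X] [FiniteDimensional k S'.X] [FiniteDimensional k M'.X]
    (hSS' : GA.cls S' = f (GH.cls S)) (hMM' : GA.cls M' = f (GH.cls M)) :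
    DirectSummand S' M' ↔ DirectSummand S M := by
  rw [GA.directSummand_iff hA hS' hM', GH.directSummand_iff hH hS hM, hSS', hMM',
    f.surjective.exists]
  simp only [← map_add, f.injective.eq_iff]

theorem finrank_coeffSpace_eq [IsAlgClosed k] (hA : IsCosemisimple k A) (hH : IsCosemisimple k H)
    {f : GH.R ≃+* GA.R} (hf : PreservesDim f) {M : Comod k H} {M' : Comod k A}
    (hM : M.IsComodule) (hM' : M'.IsComodule) [FiniteDimensional k M.X]
    [FiniteDimensional k M'.X] (hMM' : GA.cls M' = f (GH.cls M)) :
    finrank k M'.coeffSpace = finrank k M.coeffSpace := by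
  classical
  induction hn : finrank k M.X using Nat.strong_induction_on generalizing M M' with
  | _ n ih =>
  cases subsingleton_or_nontrivial M.X with
  | inl _ =>
    have : Subsingleton M'.X := by
      rw [GH.cls_eq_zero hM, map_zero] at hMM'
      exact (GA.isAddUnit_cls_iff hM').1 (hMM' ▸ isAddUnit_zero)
    rw [coeffSpace_eq_bot, coeffSpace_eq_bot, finrank_bot, finrank_bot]
  | inr _ =>
    obtain ⟨S, T, hS, hT, _, e⟩ := exists_isSimple_iso_dsum hH hM
    have := hS.2.1
    have := hS.2.2.1
    rw [GH.cls_eq_add_of_iso_dsum hM hS.1 hT e, map_add] at hMM'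
    obtain ⟨S', T', ⟨hS', _, hSS'⟩, ⟨hT', _, hTT'⟩, e'⟩ := GA.exists_iso_dsum_of_cls_eq_add hM' hMM'
    have hS'simple : S'.IsSimple := by
      rw [GA.isSimple_iff hA hS', hSS', AddEquiv.addIrreducible_iff]
      exact GH.addIrreducible_cls hS
    have hlt : finrank k T.X < n := by
      obtain ⟨e, -⟩ := e
      have : finrank k M.X = finrank k (S.X × T.X) := e.finrank_eq
      rw [← hn, this, finrank_prod]
      exact Nat.lt_add_of_pos_left finrank_pos
    rw [e.coeffSpace_eq, e'.coeffSpace_eq, hS'simple.finrank_coeffSpace_dsum hA hT',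
      hS.finrank_coeffSpace_dsum hH hT, hf S hS S' hS' inferInstance hSS',
      ih _ hlt hT hT' hTT' rfl,
      if_congr (directSummand_congr hA hH f hS.1 hT hS' hT' hSS' hTT') rfl rfl]

theorem finrank_coeffSpace_pow_eq [IsAlgClosed k] (hA : IsCosemisimple k A)
    (hH : IsCosemisimple k H) {f : GH.R ≃+* GA.R} (hf : PreservesDim f) {M : Comod k H}
    {M' : Comod k A} (hM : M.IsComodule) (hM' : M'.IsComodule) [FiniteDimensional k M.X]
    [FiniteDimensional k M'.X] (hMM' : GA.cls M' = f (GH.cls M)) (n : ℕ) :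
    finrank k ↥(M'.coeffSpace ^ n) = finrank k ↥(M.coeffSpace ^ n) := by
  rw [← coeffSpace_tpow, ← coeffSpace_tpow]
  refine finrank_coeffSpace_eq hA hH hf (hM.tpow n) (hM'.tpow n) ?_
  rw [GA.cls_tpow hM', GH.cls_tpow hM, hMM', map_pow]

theorem GKdim_le_of_coeffSpace_pow (h : ∀ M : Comod k H, M.IsComodule → FiniteDimensional k M.X →
      ∃ M' : Comod k A, FiniteDimensional k M'.X ∧
        ∀ n, finrank k ↥(M.coeffSpace ^ n) ≤ finrank k ↥(M'.coeffSpace ^ n)) :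
    GKdim k H ≤ GKdim k A := by
  refine GKdim_le fun V _ => ?_
  obtain ⟨M, hM, _, hVM⟩ := exists_coeffSpace_ge V
  obtain ⟨M', _, hMM'⟩ := h M hM inferInstance
  refine (growthRate_mono (.of_forall fun n => ?_)).trans (growthRate_le_GKdim M'.coeffSpace)
  have := finiteDimensional_pow M.coeffSpace n
  exact (Submodule.finrank_mono (pow_le_pow_left' hVM n)).trans (hMM' n)

theorem GKdim_eq_of_preservesDim [IsAlgClosed k] (hA : IsCosemisimple k A)
    (hH : IsCosemisimple k H) {f : GH.R ≃+* GA.R} (hf : PreservesDim f) :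
    GKdim k H = GKdim k A := by
  refine le_antisymm (GKdim_le_of_coeffSpace_pow fun M hM _ => ?_)
    (GKdim_le_of_coeffSpace_pow fun M' hM' _ => ?_)
  · obtain ⟨M', hM', hfin, hMM'⟩ := GA.cls_surj (f (GH.cls M))
    exact ⟨M', hfin, fun n => (finrank_coeffSpace_pow_eq hA hH hf hM hM' hMM' n).ge⟩
  · obtain ⟨M, hM, hfin, hMM'⟩ := GH.cls_surj (f.symm (GA.cls M'))
    exact ⟨M, hfin, fun n =>
      (finrank_coeffSpace_pow_eq hA hH hf hM hM' (f.symm_apply_eq.1 hMM'.symm) n).le⟩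

end Comparison

end GrSemiring

theorem GKdim_eq_of_central_of_finite {k A H : Type} [Field k] [CommRing A] [Ring H] [Algebra k A]
    [Algebra k H] {φ : A →ₐ[k] H} (hinj : Function.Injective φ)
    (hcentral : ∀ a h, φ a * h = h * φ a) (s : Finset H)
    (hs : ∀ h, h ∈ Submodule.span k {x | ∃ a, ∃ y ∈ s, x = φ a * y}) :
    GKdim k H = GKdim k A := by
  let := φ.toRingHom.toAlgebra' hcentral
  have : IsScalarTower k A H := .of_algebraMap_eq fun c => (φ.commutes c).symm
  have : Module.Finite A H := by
    refine ⟨⟨s, eq_top_iff.2 fun h _ => ?_⟩⟩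
    refine Submodule.span_le (p := (Submodule.span A (s : Set H)).restrictScalars k) |>.2 ?_ (hs h)
    rintro _ ⟨a, y, hy, rfl⟩
    exact Submodule.smul_mem (Submodule.span A (s : Set H)) a (Submodule.subset_span hy)
  exact GKdim_eq_of_finite hinj

theorem stmt5_general {k : Type} [Field k] [IsAlgClosed k] {A : Type} [CommRing A]
    [HopfAlgebra k A] (hfgA : Algebra.FiniteType k A) {H : Type} [Ring H] [HopfAlgebra k H]
    (h : (IsCosemisimple k A ∧ IsCosemisimple k H ∧ ∃ (GA : GrSemiring k A) (GH : GrSemiring k H)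
        (f : GH.R ≃+* GA.R), GrSemiring.PreservesDim f) ∨
      ∃ φ : A →ₐ[k] H, Function.Injective φ ∧ (∀ a b, φ a * b = b * φ a) ∧
        ∃ s : Finset H, ∀ b, b ∈ Submodule.span k {x | ∃ a, ∃ y ∈ s, x = φ a * y})
    {d : ℕ} (hd : ringKrullDim A = d) : GKdim k H = d := by
  rw [← GKdim_eq_of_ringKrullDim_eq hfgA hd]
  obtain ⟨hA, hH, GA, GH, f, hf⟩ | ⟨φ, hinj, hcentral, s, hs⟩ := h
  · exact GrSemiring.GKdim_eq_of_preservesDim hA hH hf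
  · exact GKdim_eq_of_central_of_finite hinj hcentral s hs

/-- Proposition 3.1 of the paper.  Let `k` be algebraically
closed of characteristic `0`, let `G` be a semisimple, connected, simply
connected algebraic group (in particular linearly reductive), presented by its
coordinate Hopf algebra `A = O(G)`, and let `q ∈ k` be a nonzero scalar; if `q`
is a root of unity of order `ℓ` we assume `ℓ` is odd.  The quantized coordinate
ring `H = O_q(G) ⊆ U_q(𝔤)°` is a finitely generated Hopf algebra which:
* for `q` not a root of unity is cosemisimple and a quantum function algebra on
  `G` (i.e. `(R_+(H), d_H) ≅ (R_+(G), d_G)`), and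
* for `q` a root of unity (of odd order) is a finite module over a central
  subalgebra isomorphic to `O(G)`.
Then `GKdim O_q(G) = dim G` (the Krull dimension of `O(G)`). -/
theorem stmt5 (k : Type) [Field k] [IsAlgClosed k] [CharZero k]
    (A : Type) [CommRing A] [HopfAlgebra k A]
    (hred : IsReduced A) (hfgA : Algebra.FiniteType k A)
    (hA : IsCosemisimple k A)
    (H : Type) [Ring H] [HopfAlgebra k H]
    (hfgH : Algebra.FiniteType k H)
    (q : k) (hq : q ≠ 0)
    (hodd : ∀ ℓ : ℕ, 0 < ℓ → orderOf q = ℓ → Odd ℓ)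
    (hgeneric : (¬ ∃ n : ℕ, 0 < n ∧ q ^ n = 1) →
      IsCosemisimple k H ∧
        ∃ (GA : GrSemiring k A) (GH : GrSemiring k H) (f : GH.R ≃+* GA.R),
          ∀ M : Comod k H, M.IsSimple →
            ∀ M' : Comod k A, M'.IsComodule → FiniteDimensional k M'.X →
              GA.cls M' = f (GH.cls M) →
                Module.finrank k M'.X = Module.finrank k M.X)
    (hroot : (∃ n : ℕ, 0 < n ∧ q ^ n = 1) →
      ∃ φ : A →ₐ[k] H, Function.Injective φ ∧
        (∀ a : A, ∀ h : H, φ a * h = h * φ a) ∧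
        ∃ s : Finset H, ∀ h : H,
          h ∈ Submodule.span k {x : H | ∃ a : A, ∃ y ∈ s, x = φ a * y})
    (d : ℕ) (hd : ringKrullDim A = d) :
    GKdim k H = d := by
  exact stmt5_general hfgA ((em _).symm.imp (fun h => ⟨hA, hgeneric h⟩) hroot) hd
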